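/- Let q be a prime power and let r be a divisor of q+1 with 1 < r < q+1; set m := (q+1)/r. Then there is no finite abelian group containing a partial difference set with parameters ( q³, (q−1)·(m(q+1) − q), r·(m−1)³ + r − 3, (m−1)·(m(q+1) − q) ). -/

import Mathlib

/-!
Put `m = (q + 1) / r > 1` and let `l` be a prime divisor of `m`, so that `q ≡ -1` and `m ≡ 0`
modulo `l`. The four parameters then reduce to `(-1, -2, -3, -1)`. In the group algebra
`𝔽_l[G]`, write `s` for the sum of the elements of `S` and `N` for the sum of all elements of `G`;
the partial difference set equations become `s² = -1 - 2s - N`, `s N = -2N`, `N² = -N`, and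
therefore `(s + 1 - N)² = 0`. (In terms of strongly regular graphs, the two restricted eigenvalues
differ by `m q`, hence coincide modulo `l`.) As `l` does not divide `|G| = q³`, the algebra
`𝔽_l[G]` is reduced: its Frobenius map permutes the coefficients (`sq_eq_zero_groupAlgebra`). So
`s + 1 = N`, that is, `S = G \ {1}`, and comparing `k` with `q³ - 1` gives `r = 1`, which is
excluded.
-/

open Finset MonoidAlgebra in
/-- The group algebra over `𝔽_l` of a finite abelian group of order prime to `l` is reduced:
`x ^ l` is obtained from `x` by moving coefficients along the bijection `g ↦ g ^ l`. -/
theorem sq_eq_zero_groupAlgebra {G : Type*} [CommGroup G] [Fintype G] (l : ℕ) [Fact l.Prime]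
    (hG : (Nat.card G).Coprime l) (x : MonoidAlgebra (ZMod l) G) (hx : x ^ 2 = 0) : x = 0 := by
  classical
  have : CharP (MonoidAlgebra (ZMod l) G) l :=
    charP_of_injective_algebraMap (algebraMap (ZMod l) (MonoidAlgebra (ZMod l) G)).injective l
  have hl : x ^ l = 0 := by
    obtain ⟨n, hn⟩ := Nat.exists_eq_add_of_le (Fact.out : l.Prime).two_le
    exact (congrArg (x ^ ·) hn).trans (by simp [pow_add, hx])
  have hsum : x = ∑ g, single g (x.coeff g) := by
    ext h
    simp [coeff_sum]
  rw [hsum, sum_pow_char] at hl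
  simp only [single_pow, ZMod.pow_card] at hl
  have hbij := hG.pow_left_bijective
  ext g
  have h := DFunLike.congr_fun (congrArg coeff hl) (g ^ l)
  simpa [coeff_sum, Finsupp.single_apply, hbij.1.eq_iff] using h

open Finset MonoidAlgebra in
/-- A symmetric `T` that is a partial difference set with parameters `(-1, -2, -3, -1)` modulo `l`
consists of all nonidentity elements of `G`. -/
theorem mem_of_pds_mod {G : Type*} [CommGroup G] [Fintype G] [DecidableEq G] (l : ℕ) [Fact l.Prime]
    (hG : (Nat.card G).Coprime l) (T : Finset G) (h1 : 1 ∉ T) (hinv : ∀ s ∈ T, s⁻¹ ∈ T)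
    (hv : (Fintype.card G : ZMod l) = -1) (hk : (#T : ZMod l) = -2)
    (hlm : ∀ g : G, g ≠ 1 →
      (#{p ∈ T ×ˢ T | p.1 * p.2⁻¹ = g} : ZMod l) = if g ∈ T then -3 else -1)
    (g : G) (hg : g ≠ 1) : g ∈ T := by
  set s : MonoidAlgebra (ZMod l) G := ∑ a ∈ T, single a 1 with hs
  set N : MonoidAlgebra (ZMod l) G := ∑ a, single a 1 with hN
  have hsc (g : G) : s.coeff g = if g ∈ T then 1 else 0 := by
    simp [hs, coeff_sum, Finsupp.single_apply]
  have hNc (g : G) : N.coeff g = 1 := by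
    simp [hN, coeff_sum, Finsupp.single_apply]
  have h1c (g : G) : (1 : MonoidAlgebra (ZMod l) G).coeff g = if g = 1 then 1 else 0 := by
    simp [one_def, Finsupp.single_apply, eq_comm]
  have haN (a : G) : single a 1 * N = N := by
    ext h
    simp [hNc]
  have hsN : s * N = -2 * N := by
    rw [hs, sum_mul, sum_congr rfl fun a _ => haN a, sum_const, ← Nat.cast_smul_eq_nsmul (ZMod l),
      hk]
    simp [neg_smul, two_smul, two_mul]
  have hNN : N * N = -N := by
    nth_rw 1 [hN]
    rw [sum_mul, sum_congr rfl fun a _ => haN a, sum_const, ← Nat.cast_smul_eq_nsmul (ZMod l),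
      card_univ, hv]
    simp
  have hss : s * s = -1 - (s + s) - N := by
    ext g
    have hcoef : (s * s).coeff g = #{p ∈ T ×ˢ T | p.1 * p.2⁻¹ = g} := by
      have hflip : (#{p ∈ T ×ˢ T | p.1 * p.2⁻¹ = g} : ZMod l)
          = ∑ a ∈ T, ∑ b ∈ T, if a * b = g then 1 else 0 := by
        rw [card_filter, sum_product]
        push_cast
        refine sum_congr rfl fun a _ => ?_
        exact sum_nbij' (·⁻¹) (·⁻¹) hinv hinv (by simp) (by simp) (by simp)
      rw [hflip, hs, sum_mul_sum]
      simp [coeff_sum, single_mul_single, Finsupp.single_apply]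
    rw [hcoef]
    simp only [coeff_sub, coeff_neg, coeff_add, Finsupp.sub_apply, Finsupp.neg_apply,
      Finsupp.add_apply, hsc, hNc, h1c]
    by_cases hg : g = 1
    · subst hg
      have hdiag : #{p ∈ T ×ˢ T | p.1 * p.2⁻¹ = 1} = #T := by
        rw [← diag_card T]
        congr 1
        ext ⟨a, b⟩
        simp only [mem_filter, mem_product, mem_diag, mul_inv_eq_one]
        constructor
        · rintro ⟨⟨h, _⟩, e⟩
          exact ⟨h, e⟩
        · rintro ⟨h, e⟩
          exact ⟨⟨h, e ▸ h⟩, e⟩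
      rw [hdiag, hk]
      simp only [h1, if_true, if_false]
      ring
    · rw [hlm g hg]
      by_cases hT : g ∈ T
      · simp only [hT, hg, if_true, if_false]
        ring
      · simp only [hT, hg, if_false]
        ring
  have h0 : s + 1 - N = 0 := by
    apply sq_eq_zero_groupAlgebra l hG
    linear_combination hss - 2 * hsN + hNN
  have h := DFunLike.congr_fun (congrArg coeff h0) g
  simp only [coeff_sub, coeff_add, coeff_zero, Finsupp.sub_apply,
      Finsupp.add_apply, hsc, hNc, h1c, hg, if_false] at h
  by_contra hT
  simp [hT] at h


attribute [local instance] Classical.propDecidable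

/-- `S` is a `(v,k,l,m)` partial difference set in the group `G`:
`G` has order `v`, `|S| = k`, `1 ∉ S`, `S = S⁻¹`, and every nonidentity `g ∈ G` has exactly
`l` (resp. `m`) representations `g = x * y⁻¹` with `x, y ∈ S` when `g ∈ S` (resp. `g ∉ S`). -/
def IsPDS {G : Type*} [Group G] (v k l m : ℕ) (S : Set G) : Prop :=
  Nat.card G = v ∧ Nat.card S = k ∧ (1 : G) ∉ S ∧ (∀ s ∈ S, s⁻¹ ∈ S) ∧
  ∀ g : G, g ≠ 1 →
    Nat.card {p : ↥S × ↥S // (p.1 : G) * (p.2 : G)⁻¹ = g} = if g ∈ S then l else m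

/-- For a prime power `q` and a divisor `r` of `q+1` with `1 < r < q+1` and `m = (q+1)/r`,
there is no abelian PDS with parameters
`(q³, (q−1)(m(q+1)−q), r(m−1)³+r−3, (m−1)(m(q+1)−q))`. -/
theorem stmt_8 (q r : ℕ) (hq : IsPrimePow q) (hr : r ∣ q + 1) (hr1 : 1 < r) (hrq : r < q + 1)
    {G : Type*} [CommGroup G] [Finite G] (S : Set G) :
    ¬ IsPDS (q ^ 3) ((q - 1) * ((q + 1) / r * (q + 1) - q))
        (r * ((q + 1) / r - 1) ^ 3 + r - 3)
        (((q + 1) / r - 1) * ((q + 1) / r * (q + 1) - q)) S := by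
  rintro ⟨hv, hk, h1, hinv, hcount⟩
  obtain ⟨m, hm⟩ := hr
  have hm' : (q + 1) / r = m := by rw [hm, Nat.mul_div_cancel_left _ (by omega)]
  rw [hm'] at hk hcount
  have hm2 : 2 ≤ m := by
    by_contra hlt
    have : r * m ≤ r * 1 := Nat.mul_le_mul_left r (by omega)
    omega
  obtain ⟨l, hl, hlm⟩ := Nat.exists_prime_and_dvd (show m ≠ 1 by omega)
  have : Fact l.Prime := ⟨hl⟩
  have := Fintype.ofFinite G
  have hm0 : (m : ZMod l) = 0 := (ZMod.natCast_eq_zero_iff m l).2 hlm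
  have hq0 : (q : ZMod l) = -1 := by
    have : ((q + 1 : ℕ) : ZMod l) = 0 := by rw [hm, Nat.cast_mul, hm0, mul_zero]
    push_cast at this
    linear_combination this
  have hq1 : 1 < q := hq.one_lt
  have hcop : (Nat.card G).Coprime l := by
    rw [hv]
    refine Nat.Coprime.pow_left 3 ((Nat.coprime_comm).1 ((Nat.Prime.coprime_iff_not_dvd hl).2 ?_))
    intro h
    have h0 := (ZMod.natCast_eq_zero_iff q l).2 h
    rw [hq0] at h0
    exact one_ne_zero (neg_eq_zero.1 h0)
  -- The truncated subtractions in the parameters are genuine ones.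
  obtain ⟨K, hK⟩ : ∃ K, m * (q + 1) = q + K :=
    Nat.exists_eq_add_of_le (by nlinarith)
  obtain ⟨n, rfl⟩ : ∃ n, m = n + 1 := ⟨m - 1, by omega⟩
  obtain ⟨p, rfl⟩ : ∃ p, q = p + 1 := ⟨q - 1, by omega⟩
  obtain ⟨L, hL⟩ : ∃ L, r * n ^ 3 + r = 3 + L := by
    refine Nat.exists_eq_add_of_le ?_
    have : 1 ≤ n ^ 3 := Nat.one_le_pow _ _ (by omega)
    nlinarith
  simp only [Nat.add_sub_cancel, hK, hL, Nat.add_sub_cancel_left] at hk hcount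
  have hK' : (K : ZMod l) = 1 := by
    have := congrArg (Nat.cast : ℕ → ZMod l) hK
    push_cast at this hm0 hq0
    linear_combination -this - hq0 + (p + 1 + 1 : ZMod l) * hm0
  have hn' : (n : ZMod l) = -1 := by
    push_cast at hm0
    linear_combination hm0
  have hp' : (p : ZMod l) = -2 := by
    push_cast at hq0
    linear_combination hq0
  have hL' : (L : ZMod l) = -3 := by
    have := congrArg (Nat.cast : ℕ → ZMod l) hL
    push_cast at this
    rw [hn'] at this
    linear_combination -this
  have hkT : S.toFinset.card = p * K := by
    rw [Set.toFinset_card, ← Nat.card_eq_fintype_card, hk]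
  have hall : ∀ g : G, g ≠ 1 → g ∈ S.toFinset := by
    refine mem_of_pds_mod l hcop S.toFinset (by simpa using h1) (by simpa using hinv) ?_ ?_ ?_
    · rw [← Nat.card_eq_fintype_card, hv]
      push_cast
      rw [hp']
      ring
    · rw [hkT]
      push_cast
      rw [hp', hK']
      ring
    · intro g hg
      have hc := hcount g hg
      have e : {p : ↥S × ↥S // (p.1 : G) * (p.2 : G)⁻¹ = g} ≃
          {p // p ∈ (S.toFinset ×ˢ S.toFinset).filter fun p => p.1 * p.2⁻¹ = g} :=
        { toFun := fun x => ⟨(x.1.1, x.1.2), Finset.mem_filter.2 ⟨by simp, x.2⟩⟩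
          invFun := fun x =>
            have h := Finset.mem_filter.1 x.2
            have h' := Finset.mem_product.1 h.1
            ⟨(⟨x.1.1, Set.mem_toFinset.1 h'.1⟩, ⟨x.1.2, Set.mem_toFinset.1 h'.2⟩), h.2⟩
          left_inv := fun x => rfl
          right_inv := fun x => rfl }
      rw [Nat.card_congr e, Nat.card_eq_fintype_card, Fintype.card_coe] at hc
      simp only [Set.mem_toFinset]
      have hc' := congrArg (Nat.cast : ℕ → ZMod l) hc
      rw [apply_ite (Nat.cast : ℕ → ZMod l), Nat.cast_mul, hn', hK', hL'] at hc'
      convert hc' using 2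
      norm_num
  have hcompl : S.toFinset = Finset.univ.erase 1 := by
    ext g
    simp only [Finset.mem_erase, Finset.mem_univ, and_true]
    refine ⟨fun h e => h1 ?_, hall g⟩
    rw [← e]
    simpa using h
  have hfin : p * K + 1 = (p + 1) ^ 3 := by
    rw [← hkT, hcompl, ← hv, Nat.card_eq_fintype_card]
    exact Finset.card_erase_add_one (Finset.mem_univ 1)
  -- Cancelling `p = q - 1` leaves `K = q² + q + 1`, that is, `m = q + 1`.
  have hKval : K = (p + 1) ^ 2 + (p + 1) + 1 := by
    refine Nat.eq_of_mul_eq_mul_left (show 0 < p by omega) ?_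
    linarith [show (p + 1) ^ 3 = p * ((p + 1) ^ 2 + (p + 1) + 1) + 1 by ring]
  have hmq : n + 1 = p + 1 + 1 := by
    refine Nat.eq_of_mul_eq_mul_right (show 0 < p + 1 + 1 by omega) ?_
    rw [hK, hKval]
    ring
  nlinarith
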